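/- Let F ⊆ X^ω be such that F contains every ultimately periodic ω-word and every ω-word in F is non-disjunctive (i.e., Ult ⊆ F ⊆ R₀ = ⋃_{w∈X*}(X^ω \ X*·w·X^ω)). Then F does not have the Automatic Baire property. -/

import Mathlib

open Set MeasureTheory Computability

namespace AutoBaire

/-- The Cantor topology on the space of ω-words over `X`:
the product of the discrete topology on `X`. -/
def cantorTop (X : Type) : TopologicalSpace (ℕ → X) :=
  @Pi.topologicalSpace ℕ (fun _ => X) (fun _ => ⊥)

/-- The Borel σ-algebra of the Cantor space. -/
def cantorBorel (X : Type) : MeasurableSpace (ℕ → X) :=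
  @borel (ℕ → X) (cantorTop X)

variable {X : Type}

/-- Concatenation `w·ξ` of a finite word with an ω-word. -/
def wcat (w : List X) (ξ : ℕ → X) : ℕ → X :=
  Stream'.appendStream' w ξ

/-- The ball (cylinder) `w·X^ω`. -/
def cyl (w : List X) : Set (ℕ → X) := {ξ | ∃ η : ℕ → X, ξ = wcat w η}

/-- The ω-language `W·A` for a language `W` and an ω-language `A`. -/
def catOmega (W : Language X) (A : Set (ℕ → X)) : Set (ℕ → X) :=
  {ξ | ∃ w ∈ W, ∃ η ∈ A, ξ = wcat w η}

/-- `V^ω`: the set of ω-words that are infinite concatenations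
`v₁·v₂·⋯` of non-empty words `vᵢ ∈ V`. -/
def omegaPow (V : Language X) : Set (ℕ → X) :=
  {ξ | ∃ f : ℕ → List X, (∀ i, f i ∈ V ∧ f i ≠ []) ∧
    ∀ k, ξ ∈ cyl (((List.range k).map f).flatten)}

/-- Regular languages: those obtained from finite languages via the operations
union, concatenation and star. -/
inductive IsRegLang : Language X → Prop
  | finite (W : Language X) : (W : Set (List X)).Finite → IsRegLang W
  | union (W V : Language X) : IsRegLang W → IsRegLang V → IsRegLang (W + V)
  | concat (W V : Language X) : IsRegLang W → IsRegLang V → IsRegLang (W * V)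
  | star (W : Language X) : IsRegLang W → IsRegLang (W∗)

/-- Regular ω-languages: finite unions `⋃ᵢ Wᵢ·Vᵢ^ω` with `Wᵢ, Vᵢ` regular. -/
def IsRegOmega (F : Set (ℕ → X)) : Prop :=
  ∃ (n : ℕ) (W V : Fin n → Language X),
    (∀ i, IsRegLang (W i) ∧ IsRegLang (V i)) ∧
    F = ⋃ i, catOmega (W i) (omegaPow (V i))

/-- `X*·w·X^ω`: the set of ω-words containing `w` as an infix. -/
def infixOcc (w : List X) : Set (ℕ → X) :=
  {ξ | ∃ u : List X, ξ ∈ cyl (u ++ w)}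

/-- An ω-word is disjunctive if every finite word occurs in it as an infix. -/
def Disjunctive (ξ : ℕ → X) : Prop := ∀ w : List X, ξ ∈ infixOcc w

/-- Ultimately periodic ω-words: `ξ = w·v·v·v·⋯` with `v ≠ e`. -/
def UltPeriodic (ξ : ℕ → X) : Prop :=
  ∃ (w v : List X) (h : v ≠ []), ξ = wcat w (Stream'.cycle v h)

/-- The Automatic Baire property: `F Δ E ⊆ F'` for some regular open
ω-language `E` and some regular ω-language `F'` of first Baire category. -/
def HasABP (F : Set (ℕ → X)) : Prop :=
  ∃ E F' : Set (ℕ → X),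
    IsRegOmega E ∧ @IsOpen _ (cantorTop X) E ∧
    IsRegOmega F' ∧ @IsMeagre _ (cantorTop X) F' ∧
    symmDiff F E ⊆ F'

/-- The measure is finite and non-null: `0 < μ(X^ω) < ∞`. -/
def FiniteNonNull (μ : @MeasureTheory.Measure (ℕ → X) (cantorBorel X)) : Prop :=
  0 < μ Set.univ ∧ μ Set.univ < ⊤

/-- `supp(μ) = X^ω`: every non-empty open set has positive measure. -/
def FullSupport (μ : @MeasureTheory.Measure (ℕ → X) (cantorBorel X)) : Prop :=
  ∀ U : Set (ℕ → X), @IsOpen _ (cantorTop X) U → U.Nonempty → 0 < μ U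

/-- The balance condition: there is `c > 0` such that for all `w ∈ X*`, `x ∈ X`
either `μ(wx·X^ω) = 0` or `c·μ(w·X^ω) ≤ μ(wx·X^ω)`. -/
def Balanced (μ : @MeasureTheory.Measure (ℕ → X) (cantorBorel X)) : Prop :=
  ∃ c : ENNReal, 0 < c ∧ ∀ (w : List X) (x : X),
    μ (cyl (w ++ [x])) = 0 ∨ c * μ (cyl w) ≤ μ (cyl (w ++ [x]))

/-!
A meagre regular ω-language misses `w^ω` for some word `w`. Indeed, let `F' = ⋃ᵢ Wᵢ·Vᵢ^ω` and let
`w ≠ e` generate a minimal right ideal in the syntactic monoids of all the `Vᵢ*` at once. If some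
`ξ ∈ Wᵢ·Vᵢ^ω` contains `w` infinitely often, then `u·w·v ∈ Vᵢ*` for some `u` and `v`, and by the
choice of `w` every word `u·w·y` extends to an element `u·w·y·z·v` of `Vᵢ*`. Chaining such elements
shows that `Wᵢ·Vᵢ^ω` contains generic ω-words, so it is not meagre.

Now let `F Δ E ⊆ F'` witness the Automatic Baire property of `F`. As `R₀` is meagre, so is the open
set `E ⊆ F ∪ F'`; by the Baire category theorem `E` is empty, whence `Ult ⊆ F ⊆ F'`, although
`F'` misses some `w^ω`.
-/

section RegularLanguage

variable {α : Type*} {L M : Language α}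

theorem leftQuotient_mono (h : L ≤ M) (u : List α) : L.leftQuotient u ≤ M.leftQuotient u :=
  fun _ hx => h hx

theorem leftQuotient_mul_le (L M : Language α) (u : List α) :
    L.leftQuotient u * M ≤ (L * M).leftQuotient u := by
  rintro _ ⟨x, hx, y, hy, rfl⟩
  exact ⟨u ++ x, hx, y, hy, List.append_assoc u x y⟩

theorem leftQuotient_mul_kstar_le (L : Language α) (u : List α) :
    L.leftQuotient u * L∗ ≤ (L∗).leftQuotient u :=
  (leftQuotient_mul_le L (L∗) u).trans (leftQuotient_mono mul_kstar_le_kstar u)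

theorem leftQuotient_le_leftQuotient_mul (h : [] ∈ L) (M : Language α) (u : List α) :
    M.leftQuotient u ≤ (L * M).leftQuotient u :=
  fun _ hx => ⟨[], h, _, hx, rfl⟩

theorem mem_of_cons_mem_mul {a : α} {x : List α} (h : a :: x ∈ L * M) :
    x ∈ L.leftQuotient [a] * M ∨ [] ∈ L ∧ a :: x ∈ M := by
  obtain ⟨p, hp, q, hq, hpq⟩ := h
  rcases List.append_eq_cons_iff.1 hpq with ⟨rfl, rfl⟩ | ⟨p', rfl, rfl⟩
  · exact Or.inr ⟨hp, hq⟩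
  · exact Or.inl ⟨p', hp, q, hq, rfl⟩

theorem mem_of_cons_mem_kstar {a : α} {x : List α} (h : a :: x ∈ L∗) :
    x ∈ L.leftQuotient [a] * L∗ := by
  obtain ⟨_ | ⟨b, l⟩, hx, hl⟩ := Language.mem_kstar_iff_exists_nonempty.1 h
  · cases hx
  · obtain ⟨hb, hb_ne⟩ := hl b List.mem_cons_self
    obtain ⟨c, b', rfl⟩ := List.exists_cons_of_ne_nil hb_ne
    obtain ⟨rfl, rfl⟩ := List.cons_eq_cons.1 hx
    exact ⟨b', hb, l.flatten,
      Language.join_mem_kstar fun y hy => (hl y (List.mem_cons_of_mem _ hy)).1, rfl⟩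

theorem append_mem_kstar {x y : List α} (hx : x ∈ L∗) (hy : y ∈ L∗) : x ++ y ∈ L∗ :=
  kstar_mul_kstar L ▸ Language.append_mem_mul hx hy

theorem exists_append_of_mem_kstar {x : List α} (hx : x ∈ L∗) (hx_ne : x ≠ []) :
    ∃ a ∈ L, a ≠ [] ∧ ∃ y ∈ L∗, x = a ++ y := by
  obtain ⟨b, x, rfl⟩ := List.exists_cons_of_ne_nil hx_ne
  obtain ⟨a, ha, y, hy, rfl⟩ := mem_of_cons_mem_kstar hx
  exact ⟨b :: a, ha, List.cons_ne_nil _ _, y, hy, rfl⟩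

-- The members of `A` play the part of Antimirov's partial derivatives: each left quotient of a
-- member of `A` is the union of the members of `A` it contains.
theorem isRegular_of_finite_of_forall_cons_mem {A : Set (Language α)} (hA : A.Finite)
    (hcons : ∀ L ∈ A, ∀ a x, a :: x ∈ L → ∃ K ∈ A, K ≤ L.leftQuotient [a] ∧ x ∈ K)
    (hL : L ∈ A) : L.IsRegular := by
  have happend : ∀ u x, ∀ L ∈ A, u ++ x ∈ L → ∃ K ∈ A, K ≤ L.leftQuotient u ∧ x ∈ K := by
    intro u
    induction u with
    | nil => exact fun x L hL hx => ⟨L, hL, le_rfl, hx⟩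
    | cons a u ih =>
      intro x L hL hx
      obtain ⟨K, hK, hKL, hxK⟩ := hcons L hL a (u ++ x) hx
      obtain ⟨N, hN, hNK, hxN⟩ := ih x K hK hxK
      exact ⟨N, hN, hNK.trans (leftQuotient_mono hKL u), hxN⟩
  refine .of_finite_range_leftQuotient ((hA.finite_subsets.image sSup).subset ?_)
  rintro _ ⟨u, rfl⟩
  refine ⟨{K ∈ A | K ≤ L.leftQuotient u}, fun K hK => hK.1, ?_⟩
  refine le_antisymm (sSup_le fun K hK => hK.2) fun x hx => ?_
  obtain ⟨K, hK, hKL, hxK⟩ := happend u x L hL hx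
  exact ⟨K, ⟨hK, hKL⟩, hxK⟩

theorem isRegular_of_finite (h : (L : Set (List α)).Finite) : L.IsRegular := by
  have hsuffixes : (⋃ x ∈ (L : Set (List α)), {y | y ∈ x.tails}).Finite :=
    h.biUnion fun x _ => x.tails.finite_toSet
  refine .of_finite_range_leftQuotient (hsuffixes.finite_subsets.subset ?_)
  rintro _ ⟨u, rfl⟩ y hy
  exact mem_biUnion hy ((List.mem_tails _ _).2 (List.suffix_append u y))

theorem isRegular_mul (hL : L.IsRegular) (hM : M.IsRegular) : (L * M).IsRegular := by
  refine isRegular_of_finite_of_forall_cons_mem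
    (A := (· * M) '' range L.leftQuotient ∪ range M.leftQuotient)
    ((hL.finite_range_leftQuotient.image _).union hM.finite_range_leftQuotient) ?_
    (Or.inl ⟨L, ⟨[], rfl⟩, rfl⟩)
  rintro _ (⟨_, ⟨u, rfl⟩, rfl⟩ | ⟨u, rfl⟩) a x h
  · rcases mem_of_cons_mem_mul h with hx | ⟨hu, hx⟩
    · exact ⟨_, Or.inl ⟨_, ⟨u ++ [a], L.leftQuotient_append u [a]⟩, rfl⟩,
        leftQuotient_mul_le _ M [a], hx⟩
    · exact ⟨_, Or.inr ⟨[a], rfl⟩, leftQuotient_le_leftQuotient_mul hu M [a], hx⟩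
  · exact ⟨_, Or.inr ⟨u ++ [a], M.leftQuotient_append u [a]⟩, le_rfl, h⟩

theorem isRegular_kstar (hL : L.IsRegular) : (L∗).IsRegular := by
  refine isRegular_of_finite_of_forall_cons_mem
    (A := insert L∗ ((· * L∗) '' range L.leftQuotient))
    ((hL.finite_range_leftQuotient.image _).insert _) ?_ (Or.inl rfl)
  rintro _ (rfl | ⟨_, ⟨u, rfl⟩, rfl⟩) a x h
  · exact ⟨_, Or.inr ⟨_, ⟨[a], rfl⟩, rfl⟩, leftQuotient_mul_kstar_le L [a],
      mem_of_cons_mem_kstar h⟩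
  · rcases mem_of_cons_mem_mul h with hx | ⟨hu, hx⟩
    · exact ⟨_, Or.inr ⟨_, ⟨u ++ [a], L.leftQuotient_append u [a]⟩, rfl⟩,
        leftQuotient_mul_le _ L∗ [a], hx⟩
    · exact ⟨_, Or.inr ⟨_, ⟨[a], rfl⟩, rfl⟩, (leftQuotient_mul_kstar_le L [a]).trans
        (leftQuotient_le_leftQuotient_mul hu L∗ [a]), mem_of_cons_mem_kstar hx⟩

theorem isRegular_of_isRegLang {L : Language X} (h : IsRegLang L) : L.IsRegular := by
  induction h with
  | finite L hL => exact isRegular_of_finite hL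
  | union L M _ _ hL hM => exact hL.add hM
  | concat L M _ _ hL hM => exact isRegular_mul hL hM
  | star L _ hL => exact isRegular_kstar hL

end RegularLanguage

section Recurrent

variable {α : Type*}

/-- The syntactic congruence of a language. -/
def SyntacticEquiv (L : Language α) (x y : List α) : Prop :=
  ∀ u v, u ++ x ++ v ∈ L ↔ u ++ y ++ v ∈ L

/-- A word is recurrent for `L` if its class generates a minimal right ideal of the syntactic
monoid of `L`: every right multiple can be multiplied back to it. -/
def IsRecurrent (L : Language α) (w : List α) : Prop :=
  ∀ y, ∃ z, SyntacticEquiv L (w ++ y ++ z) w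

theorem IsRecurrent.exists_append_mem {L : Language α} {w : List α} (hw : IsRecurrent L w)
    {u v : List α} (h : u ++ w ++ v ∈ L) (y : List α) : ∃ z, u ++ (w ++ y ++ z) ++ v ∈ L :=
  (hw y).imp fun _ hz => (hz u v).2 h

-- Minimise the set of values that `f` takes on the right multiples of `w`.
theorem exists_forall_exists_append_eq [Nonempty α] {β : Type*} [Finite β] (f : List α → β) :
    ∃ w ≠ [], ∀ y, ∃ z, f (w ++ y ++ z) = f w := by
  obtain ⟨a⟩ := ‹Nonempty α›
  obtain ⟨w, hw, hmin⟩ := exists_minimalFor_of_wellFoundedLT (fun w : List α => w ≠ [])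
    (fun w => range fun z => f (w ++ z)) ⟨[a], List.cons_ne_nil a []⟩
  refine ⟨w, hw, fun y => ?_⟩
  have hle : range (fun z => f (w ++ y ++ z)) ⊆ range fun z => f (w ++ z) := by
    rintro _ ⟨z, rfl⟩
    exact ⟨y ++ z, congrArg f (List.append_assoc w y z).symm⟩
  exact hmin (List.append_ne_nil_of_left_ne_nil hw y) hle ⟨[], congrArg f w.append_nil⟩

theorem exists_isRecurrent [Nonempty α] {ι : Type*} [Finite ι] {L : ι → Language α}
    (hL : ∀ i, (L i).IsRegular) : ∃ w ≠ [], ∀ i, IsRecurrent (L i) w := by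
  choose σ hσ M hM using hL
  obtain ⟨w, hw_ne, hw⟩ := exists_forall_exists_append_eq fun x i s => (M i).evalFrom s x
  refine ⟨w, hw_ne, fun i y => (hw y).imp fun z hz u v => ?_⟩
  have hstate : ∀ s, (M i).evalFrom s (w ++ y ++ z) = (M i).evalFrom s w :=
    congrFun (congrFun hz i)
  simp only [DFA.evalFrom_of_append] at hstate
  simp only [← hM i, DFA.mem_accepts, DFA.eval, DFA.evalFrom_of_append, hstate]

end Recurrent

section OmegaWord

theorem wcat_append (x y : List X) (ξ : ℕ → X) : wcat (x ++ y) ξ = wcat x (wcat y ξ) :=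
  Stream'.append_append_stream x y ξ

theorem wcat_injective (x : List X) : Function.Injective (wcat x) :=
  fun ξ η => Stream'.append_right_injective x ξ η

theorem exists_append_of_wcat_eq_wcat {x y : List X} {ξ η : ℕ → X} (h : wcat x ξ = wcat y η)
    (hle : x.length ≤ y.length) : ∃ z, y = x ++ z := by
  induction x generalizing y with
  | nil => exact ⟨y, rfl⟩
  | cons a x ih =>
    cases y with
    | nil => exact absurd hle (Nat.not_succ_le_zero _)
    | cons b y =>
      obtain rfl : a = b := congrFun h 0
      have htail : wcat x ξ = wcat y η := funext fun n => congrFun h (n + 1)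
      obtain ⟨z, rfl⟩ := ih htail (Nat.le_of_succ_le_succ hle)
      exact ⟨z, rfl⟩

/-- The `k`-th tail of an ω-word. -/
def shift (k : ℕ) (ξ : ℕ → X) : ℕ → X := fun i => ξ (i + k)

theorem shift_shift (j k : ℕ) (ξ : ℕ → X) : shift j (shift k ξ) = shift (j + k) ξ :=
  funext fun i => congrArg ξ (Nat.add_assoc i j k)

theorem exists_length_eq_wcat_shift_eq (k : ℕ) (ξ : ℕ → X) :
    ∃ p : List X, p.length = k ∧ wcat p (shift k ξ) = ξ :=
  ⟨Stream'.take k ξ, Stream'.length_take k ξ, Stream'.append_take_drop k ξ⟩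

theorem shift_length_wcat (w : List X) (ξ : ℕ → X) : shift w.length (wcat w ξ) = ξ :=
  Stream'.drop_append_stream w ξ

/-- The ω-words in which `w` occurs beyond every position, i.e. infinitely often. -/
def OccursInfinitelyOften (w : List X) (ξ : ℕ → X) : Prop :=
  ∀ k, shift k ξ ∈ infixOcc w

theorem occursInfinitelyOften_of_eq_wcat {w : List X} (hw : w ≠ []) {ξ : ℕ → X}
    (hξ : ξ = wcat w ξ) : OccursInfinitelyOften w ξ := by
  have hshift : ∀ k, ∃ u, shift k ξ = wcat u ξ := by
    intro k
    induction k with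
    | zero => exact ⟨[], rfl⟩
    | succ k ih =>
      obtain ⟨u, hu⟩ := ih
      obtain ⟨a, v, hav⟩ : ∃ a v, u ++ w = a :: v :=
        List.exists_cons_of_ne_nil (List.append_ne_nil_of_right_ne_nil u hw)
      refine ⟨v, ?_⟩
      calc shift (k + 1) ξ = shift 1 (shift k ξ) := by rw [shift_shift, Nat.add_comm]
        _ = shift 1 (wcat (a :: v) ξ) := by rw [hu, ← hav, wcat_append, ← hξ]
        _ = wcat v ξ := rfl
  intro k
  obtain ⟨u, hu⟩ := hshift k
  exact ⟨u, ξ, by rw [hu, wcat_append, ← hξ]⟩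

end OmegaWord

section OmegaPow

theorem subset_omegaPow {V : Language X} {S : Set (ℕ → X)}
    (hS : ∀ ξ ∈ S, ∃ v ∈ V, v ≠ [] ∧ ∃ η ∈ S, ξ = wcat v η) : S ⊆ omegaPow V := by
  intro ξ hξ
  choose! v hv hv_ne next hnext hwcat using hS
  have hiter : ∀ k, next^[k] ξ ∈ S := fun k => (show MapsTo next S S from hnext).iterate k hξ
  refine ⟨fun k => v (next^[k] ξ), fun k => ⟨hv _ (hiter k), hv_ne _ (hiter k)⟩,
    fun k => ⟨next^[k] ξ, ?_⟩⟩
  induction k with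
  | zero => rfl
  | succ k ih =>
    rw [List.range_succ, List.map_append, List.flatten_append, wcat_append, List.map_singleton,
      List.flatten_singleton, Function.iterate_succ_apply', ← hwcat _ (hiter k)]
    exact ih

theorem exists_wcat_of_mem_omegaPow {V : Language X} {ξ : ℕ → X} (h : ξ ∈ omegaPow V) :
    ∃ v ∈ V, v ≠ [] ∧ ∃ η ∈ omegaPow V, ξ = wcat v η := by
  obtain ⟨f, hf, h⟩ := h
  obtain ⟨η, rfl⟩ : ξ ∈ cyl (f 0) := by simpa using h 1
  refine ⟨f 0, (hf 0).1, (hf 0).2, η, ⟨fun i => f (i + 1), fun i => hf _, fun k => ?_⟩, rfl⟩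
  obtain ⟨θ, hθ⟩ := h (k + 1)
  rw [List.range_succ_eq_map, List.map_cons, List.flatten_cons, wcat_append, List.map_map] at hθ
  exact ⟨θ, wcat_injective _ hθ⟩

theorem exists_wcat_le_length_of_mem_omegaPow {V : Language X} {ξ : ℕ → X}
    (h : ξ ∈ omegaPow V) (n : ℕ) :
    ∃ x ∈ V∗, n ≤ x.length ∧ ∃ η ∈ omegaPow V, ξ = wcat x η := by
  induction n generalizing ξ with
  | zero => exact ⟨[], Language.nil_mem_kstar V, le_rfl, ξ, h, rfl⟩
  | succ n ih =>
    obtain ⟨v, hv, hv_ne, η, hη, rfl⟩ := exists_wcat_of_mem_omegaPow h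
    obtain ⟨x, hx, hn, θ, hθ, rfl⟩ := ih hη
    have hvx : v ++ x ∈ V∗ := append_mem_kstar (le_kstar (a := V) hv) hx
    have hv_pos : 0 < v.length := List.length_pos_iff.2 hv_ne
    exact ⟨v ++ x, hvx, by rw [List.length_append]; omega, θ, hθ, (wcat_append v x θ).symm⟩

theorem omegaPow_kstar_subset (V : Language X) : omegaPow V∗ ⊆ omegaPow V := by
  suffices h : {ξ | ∃ x ∈ V∗, ∃ η ∈ omegaPow V∗, ξ = wcat x η} ⊆ omegaPow V from
    fun ξ hξ => h ⟨[], Language.nil_mem_kstar V, ξ, hξ, rfl⟩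
  refine subset_omegaPow ?_
  rintro _ ⟨x, hx, η, hη, rfl⟩
  wlog hx_ne : x ≠ [] generalizing x η
  · obtain ⟨v, hv, hv_ne, θ, hθ, rfl⟩ := exists_wcat_of_mem_omegaPow hη
    rw [not_not.1 hx_ne]
    exact this v hv θ hθ hv_ne
  obtain ⟨a, ha, ha_ne, y, hy, rfl⟩ := exists_append_of_mem_kstar hx hx_ne
  exact ⟨a, ha, ha_ne, wcat y η, ⟨y, hy, η, hη, rfl⟩, wcat_append a y η⟩

theorem exists_append_mem_kstar_of_occursInfinitelyOften {W V : Language X} {w : List X}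
    {ξ : ℕ → X} (hξ : ξ ∈ catOmega W (omegaPow V)) (hw : OccursInfinitelyOften w ξ) :
    ∃ r ∈ W, ∃ u v, u ++ w ++ v ∈ V∗ := by
  obtain ⟨r, hr, η, hη, rfl⟩ := hξ
  obtain ⟨u, θ, hθ⟩ := hw r.length
  obtain ⟨x, hx, hle, η', -, hη'⟩ :=
    exists_wcat_le_length_of_mem_omegaPow hη (u ++ w).length
  rw [shift_length_wcat, hη'] at hθ
  obtain ⟨v, rfl⟩ := exists_append_of_wcat_eq_wcat hθ.symm hle
  exact ⟨r, hr, u, v, hx⟩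

end OmegaPow

section Topology

theorem wcat_apply_of_lt {w : List X} {i : ℕ} (hi : i < w.length) (ξ : ℕ → X) :
    wcat w ξ i = w[i] :=
  Stream'.get_append_left i w ξ hi

theorem wcat_apply_length_add (w : List X) (ξ : ℕ → X) (i : ℕ) :
    wcat w ξ (w.length + i) = ξ i :=
  Stream'.get_append_right i w ξ

theorem cylinder_wcat (w : List X) (ξ : ℕ → X) :
    PiNat.cylinder (wcat w ξ) w.length = cyl w := by
  refine Subset.antisymm (fun η hη => ?_) ?_
  · obtain ⟨p, hp_length, hp⟩ := exists_length_eq_wcat_shift_eq w.length η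
    have hpw : p = w := List.ext_getElem hp_length fun i hi hi' => by
      rw [← wcat_apply_of_lt hi (shift w.length η), hp, ← wcat_apply_of_lt hi' ξ]
      exact hη i hi'
    exact ⟨shift w.length η, hpw ▸ hp.symm⟩
  · rintro _ ⟨η, rfl⟩ i hi
    rw [wcat_apply_of_lt hi, wcat_apply_of_lt hi]

theorem cyl_append_subset (p x : List X) : cyl (p ++ x) ⊆ cyl p := by
  rintro _ ⟨ξ, rfl⟩
  exact ⟨wcat x ξ, wcat_append p x ξ⟩

theorem cyl_nonempty [Nonempty X] (w : List X) : (cyl w).Nonempty :=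
  ⟨wcat w fun _ => Classical.arbitrary X, _, rfl⟩

variable [TopologicalSpace X]

theorem continuous_shift (k : ℕ) : Continuous (shift k : (ℕ → X) → ℕ → X) :=
  continuous_pi fun i => continuous_apply (i + k)

theorem continuous_wcat (w : List X) : Continuous (wcat w) := by
  refine continuous_pi fun i => ?_
  rcases lt_or_ge i w.length with hi | hi
  · simp only [wcat_apply_of_lt hi, continuous_const]
  · obtain ⟨j, rfl⟩ := Nat.exists_eq_add_of_le hi
    simp only [wcat_apply_length_add, continuous_apply]

theorem isOpenMap_shift (k : ℕ) : IsOpenMap (shift k : (ℕ → X) → ℕ → X) := by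
  intro U hU
  have himage : shift k '' U = ⋃ (p : List X) (_ : p.length = k), wcat p ⁻¹' U := by
    ext ξ
    simp only [mem_image, mem_iUnion, mem_preimage, exists_prop]
    constructor
    · rintro ⟨η, hη, rfl⟩
      obtain ⟨p, hp_length, hp⟩ := exists_length_eq_wcat_shift_eq k η
      exact ⟨p, hp_length, hp.symm ▸ hη⟩
    · rintro ⟨p, rfl, hp⟩
      exact ⟨_, hp, shift_length_wcat p ξ⟩
  rw [himage]
  exact isOpen_biUnion fun p _ => hU.preimage (continuous_wcat p)

theorem eventually_residual_forall_shift_mem {D : Set (ℕ → X)} (hD : D ∈ residual (ℕ → X)) :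
    ∀ᶠ ξ in residual (ℕ → X), ∀ k, shift k ξ ∈ D :=
  eventually_countable_forall.2 fun k =>
    tendsto_residual_of_isOpenMap (continuous_shift k) (isOpenMap_shift k) hD

variable [DiscreteTopology X]

theorem isOpen_cyl (w : List X) : IsOpen (cyl w) := by
  rcases (cyl w).eq_empty_or_nonempty with hempty | ⟨_, η, rfl⟩
  · rw [hempty]
    exact isOpen_empty
  · rw [← cylinder_wcat w η]
    exact PiNat.isOpen_cylinder (fun _ => X) _ _

theorem dense_of_forall_cyl_inter_nonempty {D : Set (ℕ → X)}
    (h : ∀ p, (cyl p ∩ D).Nonempty) : Dense D := by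
  rw [(PiNat.isTopologicalBasis_cylinders fun _ => X).dense_iff]
  rintro _ ⟨ξ, n, rfl⟩ -
  obtain ⟨p, rfl, hp⟩ := exists_length_eq_wcat_shift_eq n ξ
  rw [← hp, cylinder_wcat]
  exact h p

theorem isOpenMap_wcat (w : List X) : IsOpenMap (wcat w) := by
  intro U hU
  have himage : wcat w '' U = cyl w ∩ shift w.length ⁻¹' U := by
    ext ξ
    constructor
    · rintro ⟨η, hη, rfl⟩
      exact ⟨⟨η, rfl⟩, by rwa [mem_preimage, shift_length_wcat]⟩
    · rintro ⟨⟨η, rfl⟩, hη⟩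
      exact ⟨η, shift_length_wcat w η ▸ hη, rfl⟩
  rw [himage]
  exact (isOpen_cyl w).inter (hU.preimage (continuous_shift _))

theorem isMeagre_compl_infixOcc [Nonempty X] (w : List X) : IsMeagre (infixOcc w)ᶜ := by
  have hopen : IsOpen (infixOcc w) := by
    simp only [infixOcc, ofPred_exists, ofPred_mem_eq]
    exact isOpen_iUnion fun u => isOpen_cyl (u ++ w)
  have hdense : Dense (infixOcc w) := dense_of_forall_cyl_inter_nonempty fun p => by
    obtain ⟨ξ, hξ⟩ := cyl_nonempty (p ++ w)
    exact ⟨ξ, cyl_append_subset p w hξ, p, hξ⟩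
  rw [IsMeagre, compl_compl]
  exact residual_of_dense_open hopen hdense

-- If every tail of `ξ` starts with some `y ++ z y ++ t`, where `z y` is the word returning from
-- `w ++ y` to `w` and `t = v ++ u ++ w`, then `u ++ w` followed by `ξ` factors into blocks
-- `u ++ (w ++ y ++ z y) ++ v`, all of which lie in `V∗`.
theorem eventually_residual_wcat_mem_omegaPow [Nonempty X] {V : Language X} {u v w : List X}
    (hw_ne : w ≠ []) (hmem : u ++ w ++ v ∈ V∗) (hw : IsRecurrent V∗ w) :
    ∀ᶠ ξ in residual (ℕ → X), wcat (u ++ w) ξ ∈ omegaPow V := by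
  choose z hz using hw.exists_append_mem hmem
  let D : Set (ℕ → X) := ⋃ y, cyl (y ++ z y ++ (v ++ (u ++ w)))
  have hopen : IsOpen D := isOpen_iUnion fun y => isOpen_cyl _
  have hdense : Dense D := dense_of_forall_cyl_inter_nonempty fun p => by
    obtain ⟨ξ, hξ⟩ := cyl_nonempty (p ++ z p ++ (v ++ (u ++ w)))
    rw [List.append_assoc] at hξ
    exact ⟨ξ, cyl_append_subset _ _ hξ, mem_iUnion.2 ⟨p, by rwa [List.append_assoc]⟩⟩
  suffices hblock : wcat (u ++ w) '' {ξ | ∀ k, shift k ξ ∈ D} ⊆ omegaPow V from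
    Filter.mem_of_superset
      (eventually_residual_forall_shift_mem (residual_of_dense_open hopen hdense))
      (image_subset_iff.1 hblock)
  refine (subset_omegaPow ?_).trans (omegaPow_kstar_subset V)
  rintro _ ⟨ξ, hξ, rfl⟩
  obtain ⟨y, η, hη⟩ := mem_iUnion.1 (hξ 0)
  obtain rfl : ξ = _ := hη
  refine ⟨_, hz y, by simp [hw_ne], wcat (u ++ w) η, ⟨η, fun k => ?_, rfl⟩, ?_⟩
  · rw [← shift_length_wcat (y ++ z y ++ (v ++ (u ++ w))) η, shift_shift]
    exact hξ _
  · simp only [← wcat_append, List.append_assoc]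

theorem not_isMeagre_catOmega_omegaPow [Nonempty X] {W V : Language X} {r u v w : List X}
    (hr : r ∈ W) (hw_ne : w ≠ []) (hmem : u ++ w ++ v ∈ V∗) (hw : IsRecurrent V∗ w) :
    ¬ IsMeagre (catOmega W (omegaPow V)) := by
  intro hmeagre
  refine not_isMeagre_of_mem_residual ?_ (hmeagre.preimage_of_isOpenMap
    (continuous_wcat (r ++ (u ++ w))) (isOpenMap_wcat (r ++ (u ++ w))))
  filter_upwards [eventually_residual_wcat_mem_omegaPow hw_ne hmem hw] with ξ hξ
  exact ⟨r, hr, _, hξ, wcat_append r (u ++ w) ξ⟩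

theorem exists_forall_not_occursInfinitelyOften [Nonempty X] {F : Set (ℕ → X)}
    (hF : IsRegOmega F) (hmeagre : IsMeagre F) :
    ∃ w ≠ [], ∀ ξ ∈ F, ¬ OccursInfinitelyOften w ξ := by
  obtain ⟨n, W, V, hreg, rfl⟩ := hF
  obtain ⟨w, hw_ne, hw⟩ :=
    exists_isRecurrent fun i => isRegular_kstar (isRegular_of_isRegLang (hreg i).2)
  refine ⟨w, hw_ne, fun ξ hξ hocc => ?_⟩
  obtain ⟨i, hi⟩ := mem_iUnion.1 hξ
  obtain ⟨r, hr, u, v, hmem⟩ := exists_append_mem_kstar_of_occursInfinitelyOften hi hocc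
  exact not_isMeagre_catOmega_omegaPow hr hw_ne hmem (hw i) <|
    hmeagre.mono (subset_iUnion (fun i => catOmega (W i) (omegaPow (V i))) i)

end Topology

theorem stmt14_general {X : Type} [Countable X] [Nonempty X]
    (F : Set (ℕ → X)) (hUlt : ∀ ξ : ℕ → X, UltPeriodic ξ → ξ ∈ F)
    (hR0 : F ⊆ ⋃ w : List X, (infixOcc w)ᶜ) :
    ¬ HasABP F := by
  let _ : TopologicalSpace X := ⊥
  have _ : DiscreteTopology X := ⟨rfl⟩
  rintro ⟨E, F', -, hE_open, hF'_reg, hF'_meagre, hdiff⟩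
  change IsOpen E at hE_open
  change IsMeagre F' at hF'_meagre
  have hF_meagre : IsMeagre F := (isMeagre_iUnion isMeagre_compl_infixOcc).mono hR0
  have hE_subset : E ⊆ F ∪ F' := fun ξ hξ =>
    or_iff_not_imp_left.2 fun hξF => hdiff (Or.inr ⟨hξ, hξF⟩)
  have hE_empty : E = ∅ := not_nonempty_iff_eq_empty.1 fun hne =>
    not_isMeagre_of_isOpen hE_open hne ((hF_meagre.union hF'_meagre).mono hE_subset)
  obtain ⟨w, hw, hF'_occ⟩ := exists_forall_not_occursInfinitelyOften hF'_reg hF'_meagre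
  have hcycle_mem : Stream'.cycle w hw ∈ F := hUlt _ ⟨[], w, hw, rfl⟩
  have hcycle_mem' : Stream'.cycle w hw ∈ F' :=
    hdiff (Or.inl ⟨hcycle_mem, hE_empty ▸ notMem_empty _⟩)
  exact hF'_occ _ hcycle_mem' (occursInfinitelyOften_of_eq_wcat hw (Stream'.cycle_eq w hw))

theorem stmt14 {X : Type} [Fintype X] (hX : 2 ≤ Fintype.card X)
    (F : Set (ℕ → X)) (hUlt : ∀ ξ : ℕ → X, UltPeriodic ξ → ξ ∈ F)
    (hR0 : F ⊆ ⋃ w : List X, (infixOcc w)ᶜ) :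
    ¬ HasABP F := by
  have _ : Nonempty X := Fintype.card_pos_iff.1 (by omega)
  exact stmt14_general F hUlt hR0

end AutoBaire
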